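/- arXiv:2009.04173 — 9 statements merged into one kernel-verified Lean document; each statement's English description precedes it below -/
import Mathlib

section
/- All indifference curves of V₁ pass through the point x₁ = (−1/2, −1/2): for all p, q ∈ Δ, V₁(p) = V₁(q) if and only if the three points p, q, and (−1/2, −1/2) are collinear in ℝ², i.e., (p₁ + 1/2)(q₂ + 1/2) = (p₂ + 1/2)(q₁ + 1/2). -/
/-- The set of lotteries over three prizes, identified with points of `ℝ × ℝ`. -/
def Lott : Set (ℝ × ℝ) := {p | 0 ≤ p.1 ∧ 0 ≤ p.2 ∧ p.1 + p.2 ≤ 1}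

/-- The weighted utility function `V₁`. -/
noncomputable def V1 (p : ℝ × ℝ) : ℝ :=
  (p.2 + (1 - p.1 - p.2) / 4) / (p.1 + p.2 + (1 - p.1 - p.2) / 2)

/-- The weighted utility function `V₂`. -/
noncomputable def V2 (p : ℝ × ℝ) : ℝ :=
  (p.2 + (1 - p.1 - p.2)) / (p.1 + p.2 + 2 * (1 - p.1 - p.2))

theorem stmt_2 :
    ∀ p ∈ Lott, ∀ q ∈ Lott,
      (V1 p = V1 q ↔ (p.1 + 1 / 2) * (q.2 + 1 / 2) = (p.2 + 1 / 2) * (q.1 + 1 / 2)) := by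
  rintro p ⟨hp1, hp2, -⟩ q ⟨hq1, hq2, -⟩
  have hp : p.1 + p.2 + (1 - p.1 - p.2) / 2 ≠ 0 := ne_of_gt (by linarith)
  have hq : q.1 + q.2 + (1 - q.1 - q.2) / 2 ≠ 0 := ne_of_gt (by linarith)
  unfold V1
  rw [div_eq_div_iff hp hq]
  -- With `a = p.1 + 1/2`, `b = p.2 + 1/2`, the numerator of `V1 p` is `(3 * b - a) / 4` and its
  -- denominator `(a + b) / 2`: both are linear forms vanishing at `(-1/2, -1/2)`. So the
  -- cross-multiplied difference is a multiple, by the factor `-1/2`, of the collinearity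
  -- determinant.
  constructor <;> intro h
  · linear_combination (-2) * h
  · linear_combination (-1 / 2) * h
end

section
/- All indifference curves of V₂ pass through the point x₂ = (1, 1): for all p, q ∈ Δ, V₂(p) = V₂(q) if and only if the three points p, q, and (1, 1) are collinear in ℝ², i.e., (p₁ − 1)(q₂ − 1) = (p₂ − 1)(q₁ − 1). -/
theorem stmt_3 :
    ∀ p ∈ Lott, ∀ q ∈ Lott,
      (V2 p = V2 q ↔ (p.1 - 1) * (q.2 - 1) = (p.2 - 1) * (q.1 - 1)) := by
  rintro ⟨a, b⟩ ⟨-, -, hp⟩ ⟨c, d⟩ ⟨-, -, hq⟩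
  simp only [V2] at *
  -- On the simplex the denominators are `2 - p₁ - p₂ ≥ 1`, so cross-multiplying is an equivalence;
  -- the products `(1 - p₁) * (1 - q₁)` on the two sides then cancel.
  rw [div_eq_div_iff (by linarith) (by linarith)]
  constructor <;> intro h <;> linarith
end

section
/- For all p, q ∈ Δ with V₁(p) ≥ 1/2: V₁(p) ≥ V₁(q) if and only if V₁′(p) ≥ V₁′(q), and V₂(p) ≥ V₂(q) if and only if V₂′(p) ≥ V₂′(q). -/
/-- The non-expected utility function `V₁′`. -/
noncomputable def V1' (p : ℝ × ℝ) : ℝ := if (1 / 2 : ℝ) ≤ V1 p then V1 p else V2 p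

/-- The non-expected utility function `V₂′`. -/
noncomputable def V2' (p : ℝ × ℝ) : ℝ := if (1 / 2 : ℝ) ≤ V2 p then V2 p else V1 p

theorem half_le_V1_iff {p : ℝ × ℝ} (hp : p ∈ Lott) : (1 / 2 : ℝ) ≤ V1 p ↔ p.1 ≤ p.2 := by
  obtain ⟨h1, h2, h3⟩ := hp
  have hd : 0 < p.1 + p.2 + (1 - p.1 - p.2) / 2 := by linarith
  rw [V1, le_div_iff₀ hd]
  constructor <;> intro h <;> linarith

theorem half_le_V2_iff {p : ℝ × ℝ} (hp : p ∈ Lott) : (1 / 2 : ℝ) ≤ V2 p ↔ p.1 ≤ p.2 := by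
  obtain ⟨h1, h2, h3⟩ := hp
  have hd : 0 < p.1 + p.2 + 2 * (1 - p.1 - p.2) := by linarith
  rw [V2, le_div_iff₀ hd]
  constructor <;> intro h <;> linarith

theorem stmt_4 :
    ∀ p ∈ Lott, ∀ q ∈ Lott, (1 / 2 : ℝ) ≤ V1 p →
      ((V1 q ≤ V1 p ↔ V1' q ≤ V1' p) ∧ (V2 q ≤ V2 p ↔ V2' q ≤ V2' p)) := by
  intro p hp q hq hp1
  have hp2 : (1 / 2 : ℝ) ≤ V2 p := (half_le_V2_iff hp).2 ((half_le_V1_iff hp).1 hp1)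
  have hq12 : (1 / 2 : ℝ) ≤ V1 q ↔ (1 / 2 : ℝ) ≤ V2 q :=
    (half_le_V1_iff hq).trans (half_le_V2_iff hq).symm
  by_cases hq1 : (1 / 2 : ℝ) ≤ V1 q
  · have hq2 := hq12.1 hq1
    rw [V1', V1', V2', V2', if_pos hp1, if_pos hp2, if_pos hq1, if_pos hq2]
    exact ⟨Iff.rfl, Iff.rfl⟩
  · have hq2 : ¬ (1 / 2 : ℝ) ≤ V2 q := fun h => hq1 (hq12.2 h)
    rw [V1', V1', V2', V2', if_pos hp1, if_pos hp2, if_neg hq1, if_neg hq2]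
    rw [not_le] at hq1 hq2
    exact ⟨iff_of_true (by linarith) (by linarith), iff_of_true (by linarith) (by linarith)⟩
end

section
/- Let c ∈ ℝ², R > 0, and let p, q, r ∈ ℝ² with q ≠ p, r ≠ p, and ‖p − c‖ < R (p lies strictly inside the circle of center c and radius R). Let α ∈ [0, π] be the (undirected) angle between the vectors q − p and r − p. Then the Lebesgue measure of the set {θ ∈ [0, 2π) : det(x(θ) − p, q − p) and det(x(θ) − p, r − p) are both nonzero and have the same sign} equals 2π − 2α, where x(θ) = c + R(cos θ, sin θ) and det(u, v) = u₁v₂ − u₂v₁. -/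
/-!
Write `q - p` and `r - p` in polar form, with angles `φ₁` and `φ₂`. The ray from `p` in direction
`φ` leaves the circle at the parameter `s φ = exitAngle φ`, and the opposite ray at `s (φ - π)`;
a sum-to-product identity (`det2_eq`) gives
`det (x θ - p) (n e_φ) = 2 R n sin ((s φ - θ) / 2) sin ((θ - s (φ - π)) / 2)`.
Because `p` is strictly inside the circle, `s` is monotone (`exitAngle_mono`). So if
`φ₁ ≤ φ₂ ≤ φ₁ + π`, the four exit points are met in the order
`s (φ₁ - π) ≤ s (φ₂ - π) ≤ s φ₁ ≤ s φ₂ ≤ s (φ₁ - π) + 2π`, and within this period the two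
determinants have the same strict sign exactly on `(s (φ₂ - π), s φ₁)` and
`(s φ₂, s (φ₁ - π) + 2π)` (`window_eq`). Since `s φ + s (φ - π) = 2φ - π`, these arcs have total
length `2π - 2(φ₂ - φ₁)`. Translating the period to `[0, 2π)` and exchanging `q` and `r` if
necessary gives the theorem.
-/

open Real MeasureTheory

/-- Dot product on `ℝ × ℝ`. -/
def dot2 (u v : ℝ × ℝ) : ℝ := u.1 * v.1 + u.2 * v.2

/-- Euclidean norm on `ℝ × ℝ`. -/
noncomputable def nrm2 (u : ℝ × ℝ) : ℝ := Real.sqrt (u.1 ^ 2 + u.2 ^ 2)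

/-- The (undirected) angle in `[0, π]` between two vectors of `ℝ × ℝ`. -/
noncomputable def ang2 (u v : ℝ × ℝ) : ℝ := Real.arccos (dot2 u v / (nrm2 u * nrm2 v))

/-- Determinant of two vectors of `ℝ × ℝ`. -/
def det2 (u v : ℝ × ℝ) : ℝ := u.1 * v.2 - u.2 * v.1

/-- With `A = -(c - p)₂ / R` and `B = (c - p)₁ / R`, the parameter `θ` (chosen continuously in `φ`)
at which the ray from `p` in direction `(cos φ, sin φ)` meets the circle of center `c` and
radius `R`. -/
noncomputable def exitAngle (A B φ : ℝ) : ℝ := φ + Real.arcsin (A * Real.cos φ + B * Real.sin φ)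

lemma sq_add_sq_rot (A B φ : ℝ) :
    (A * cos φ + B * sin φ) ^ 2 + (-A * sin φ + B * cos φ) ^ 2 = A ^ 2 + B ^ 2 := by
  linear_combination (A ^ 2 + B ^ 2) * Real.sin_sq_add_cos_sq φ

lemma abs_offset_lt {A B : ℝ} (h : A ^ 2 + B ^ 2 < 1) (φ : ℝ) :
    |A * cos φ + B * sin φ| < 1 := by
  rw [← sq_lt_one_iff_abs_lt_one]
  nlinarith [sq_add_sq_rot A B φ, sq_nonneg (-A * sin φ + B * cos φ)]

/-- The derivative is `1 + k' / √(1 - k²)` with `k = A cos φ + B sin φ`, and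
`k² + k'² = A² + B² < 1`. -/
lemma exitAngle_mono {A B : ℝ} (h : A ^ 2 + B ^ 2 < 1) : Monotone (exitAngle A B) := by
  have key : ∀ φ, HasDerivAt (exitAngle A B)
      (1 + 1 / √(1 - (A * cos φ + B * sin φ) ^ 2) * (A * (-sin φ) + B * cos φ)) φ := by
    intro φ
    have hk := abs_lt.1 (abs_offset_lt h φ)
    have h1 : HasDerivAt (fun φ => A * cos φ + B * sin φ) (A * (-sin φ) + B * cos φ) φ :=
      ((Real.hasDerivAt_cos φ).const_mul A).add ((Real.hasDerivAt_sin φ).const_mul B)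
    have h2 := (Real.hasDerivAt_arcsin hk.1.ne' hk.2.ne).comp φ h1
    exact (hasDerivAt_id φ).add h2
  refine monotone_of_deriv_nonneg (fun φ => (key φ).differentiableAt) fun φ => ?_
  rw [(key φ).deriv]
  have hrot := sq_add_sq_rot A B φ
  have hpos : 0 < 1 - (A * cos φ + B * sin φ) ^ 2 := by
    nlinarith [sq_nonneg (-A * sin φ + B * cos φ)]
  have hle : |A * (-sin φ) + B * cos φ| ≤ √(1 - (A * cos φ + B * sin φ) ^ 2) :=
    Real.abs_le_sqrt (by nlinarith)
  have hs := Real.sqrt_pos.2 hpos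
  have := (abs_le.1 hle).1
  have h2 : -1 ≤ (A * (-sin φ) + B * cos φ) / √(1 - (A * cos φ + B * sin φ) ^ 2) := by
    rw [le_div_iff₀ hs]; linarith
  have h3 : 1 / √(1 - (A * cos φ + B * sin φ) ^ 2) * (A * (-sin φ) + B * cos φ)
      = (A * (-sin φ) + B * cos φ) / √(1 - (A * cos φ + B * sin φ) ^ 2) := by ring
  rw [h3]; linarith

lemma exitAngle_sub_pi (A B φ : ℝ) :
    exitAngle A B (φ - π) = φ - π - Real.arcsin (A * cos φ + B * sin φ) := by
  unfold exitAngle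
  rw [Real.cos_sub_pi, Real.sin_sub_pi,
    show A * -cos φ + B * -sin φ = -(A * cos φ + B * sin φ) by ring, Real.arcsin_neg]
  ring

lemma exitAngle_add_pi (A B φ : ℝ) :
    exitAngle A B (φ + π) = exitAngle A B (φ - π) + 2 * π := by
  rw [exitAngle_sub_pi]
  unfold exitAngle
  rw [Real.cos_add_pi, Real.sin_add_pi,
    show A * -cos φ + B * -sin φ = -(A * cos φ + B * sin φ) by ring, Real.arcsin_neg]
  ring

/-- Up to a positive factor, the determinant of `x θ - p` and the direction `φ`. -/
noncomputable def side (A B φ θ : ℝ) : ℝ :=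
  sin ((exitAngle A B φ - θ) / 2) * sin ((θ - exitAngle A B (φ - π)) / 2)

lemma two_mul_side {A B : ℝ} (h : A ^ 2 + B ^ 2 < 1) (φ θ : ℝ) :
    2 * side A B φ θ = sin (φ - θ) + (A * cos φ + B * sin φ) := by
  have hk := abs_lt.1 (abs_offset_lt h φ)
  unfold side
  rw [exitAngle_sub_pi, exitAngle]
  set k := A * cos φ + B * sin φ
  have e : (θ - (φ - π - arcsin k)) / 2 = π / 2 - (φ - θ - arcsin k) / 2 := by ring
  have hs : sin (arcsin k) = k := Real.sin_arcsin hk.1.le hk.2.le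
  rw [e, Real.sin_pi_div_two_sub]
  have e1 := Real.sin_add ((φ + arcsin k - θ) / 2) ((φ - θ - arcsin k) / 2)
  have e2 := Real.sin_sub ((φ + arcsin k - θ) / 2) ((φ - θ - arcsin k) / 2)
  rw [show (φ + arcsin k - θ) / 2 + (φ - θ - arcsin k) / 2 = φ - θ by ring] at e1
  rw [show (φ + arcsin k - θ) / 2 - (φ - θ - arcsin k) / 2 = arcsin k by ring, hs] at e2
  linarith

lemma side_periodic {A B : ℝ} (h : A ^ 2 + B ^ 2 < 1) (φ : ℝ) :
    Function.Periodic (side A B φ) (2 * π) := by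
  intro θ
  have h1 := two_mul_side h φ θ
  have h2 := two_mul_side h φ (θ + 2 * π)
  rw [show φ - (θ + 2 * π) = φ - θ - 2 * π by ring, Real.sin_sub_two_pi] at h2
  linarith

lemma sin_half_pos {x : ℝ} (h0 : 0 < x) (h1 : x < 2 * π) : 0 < sin (x / 2) :=
  Real.sin_pos_of_pos_of_lt_pi (by linarith) (by linarith)

lemma sin_half_neg {x : ℝ} (h0 : x < 0) (h1 : -(2 * π) < x) : sin (x / 2) < 0 :=
  Real.sin_neg_of_neg_of_neg_pi_lt (by linarith) (by linarith)

/-- Over one period, the same-side set is the union of two arcs between exit points. -/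
lemma window_eq {A B φ₁ φ₂ : ℝ} (h : A ^ 2 + B ^ 2 < 1) (h1 : φ₁ ≤ φ₂) (h2 : φ₂ ≤ φ₁ + π) :
    {θ | 0 < side A B φ₁ θ * side A B φ₂ θ} ∩
        Set.Ioc (exitAngle A B (φ₁ - π)) (exitAngle A B (φ₁ - π) + 2 * π) =
      Set.Ioo (exitAngle A B (φ₂ - π)) (exitAngle A B φ₁) ∪
        Set.Ioo (exitAngle A B φ₂) (exitAngle A B (φ₁ - π) + 2 * π) := by
  have m := exitAngle_mono h
  have o1 := m (show φ₁ - π ≤ φ₂ - π by linarith)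
  have o2 := m (show φ₂ - π ≤ φ₁ by linarith)
  have o3 := m h1
  have o4 := m h2
  rw [exitAngle_add_pi] at o4
  ext θ
  simp only [side, Set.mem_inter_iff, Set.mem_ofPred_eq, Set.mem_Ioc, Set.mem_union, Set.mem_Ioo]
  set s₁ := exitAngle A B φ₁
  set s₂ := exitAngle A B φ₂
  set t₁ := exitAngle A B (φ₁ - π)
  set t₂ := exitAngle A B (φ₂ - π)
  constructor
  · rintro ⟨hpos, hl, hr⟩
    rcases hr.eq_or_lt with rfl | hr
    · rw [show (t₁ + 2 * π - t₁) / 2 = π by ring] at hpos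
      simp at hpos
    have a1 : 0 < sin ((θ - t₁) / 2) := sin_half_pos (by linarith) (by linarith)
    by_contra hcon
    rw [not_or, not_and, not_and] at hcon
    -- outside the two arcs, `θ ∈ (t₁, t₂]` or `θ ∈ [s₁, s₂]`
    rcases le_or_gt θ t₂ with hθ | hθ
    · have b1 : 0 ≤ sin ((s₁ - θ) / 2) :=
        Real.sin_nonneg_of_nonneg_of_le_pi (by linarith) (by linarith)
      have b2 : 0 ≤ sin ((s₂ - θ) / 2) :=
        Real.sin_nonneg_of_nonneg_of_le_pi (by linarith) (by linarith)
      have b3 : sin ((θ - t₂) / 2) ≤ 0 :=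
        Real.sin_nonpos_of_nonpos_of_neg_pi_le (by linarith) (by linarith)
      have := mul_nonneg (mul_nonneg b1 a1.le) (mul_nonneg b2 (neg_nonneg.2 b3))
      linarith
    · have c1 : s₁ ≤ θ := not_lt.1 (hcon.1 hθ)
      have c2 : θ ≤ s₂ := not_lt.1 fun hlt => hcon.2 hlt hr
      have b1 : sin ((s₁ - θ) / 2) ≤ 0 :=
        Real.sin_nonpos_of_nonpos_of_neg_pi_le (by linarith) (by linarith)
      have b2 : 0 ≤ sin ((s₂ - θ) / 2) :=
        Real.sin_nonneg_of_nonneg_of_le_pi (by linarith) (by linarith)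
      have b3 : 0 ≤ sin ((θ - t₂) / 2) :=
        Real.sin_nonneg_of_nonneg_of_le_pi (by linarith) (by linarith)
      have := mul_nonneg (mul_nonneg (neg_nonneg.2 b1) a1.le) (mul_nonneg b2 b3)
      linarith
  · rintro (⟨hl, hr⟩ | ⟨hl, hr⟩)
    · refine ⟨mul_pos (mul_pos ?_ ?_) (mul_pos ?_ ?_), by linarith, by linarith⟩ <;>
        exact sin_half_pos (by linarith) (by linarith)
    · refine ⟨mul_pos_of_neg_of_neg (mul_neg_of_neg_of_pos ?_ ?_) (mul_neg_of_neg_of_pos ?_ ?_),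
        by linarith, by linarith⟩
      · exact sin_half_neg (by linarith) (by linarith)
      · exact sin_half_pos (by linarith) (by linarith)
      · exact sin_half_neg (by linarith) (by linarith)
      · exact sin_half_pos (by linarith) (by linarith)

/-- The measure of a periodic measurable set over a period does not depend on the period chosen. -/
lemma volume_inter_period {S : Set ℝ} (hS : MeasurableSet S)
    (hper : ∀ θ, θ + 2 * π ∈ S ↔ θ ∈ S) (t : ℝ) :
    volume (S ∩ Set.Ico 0 (2 * π)) = volume (S ∩ Set.Ioc t (t + 2 * π)) := by
  have hae : volume (S ∩ Set.Ico 0 (2 * π)) = volume (S ∩ Set.Ioc 0 (0 + 2 * π)) := by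
    rw [zero_add]
    exact measure_congr (Filter.EventuallyEq.rfl.inter Ico_ae_eq_Ioc)
  rw [hae]
  refine (isAddFundamentalDomain_Ioc Real.two_pi_pos 0 volume).measure_set_eq
    (isAddFundamentalDomain_Ioc Real.two_pi_pos t volume) hS ?_
  have hp : Function.Periodic (fun θ => θ ∈ S) (2 * π) := fun θ => propext (hper θ)
  rintro ⟨g, hg⟩
  obtain ⟨n, rfl⟩ := AddSubgroup.mem_zmultiples_iff.1 hg
  ext θ
  have := hp.zsmul n θ
  simp only [Set.mem_preimage]
  change n • (2 * π) + θ ∈ S ↔ _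
  rw [add_comm]
  exact iff_of_eq this

lemma volume_side {A B φ₁ φ₂ : ℝ} (h : A ^ 2 + B ^ 2 < 1) (h1 : φ₁ ≤ φ₂) (h2 : φ₂ ≤ φ₁ + π) :
    volume {θ ∈ Set.Ico 0 (2 * π) | 0 < side A B φ₁ θ * side A B φ₂ θ} =
      ENNReal.ofReal (2 * π - 2 * (φ₂ - φ₁)) := by
  have m := exitAngle_mono h
  have o2 := m (show φ₂ - π ≤ φ₁ by linarith)
  have o3 := m h1
  have o4 := m h2
  rw [exitAngle_add_pi] at o4
  have hmeas : MeasurableSet {θ | 0 < side A B φ₁ θ * side A B φ₂ θ} := by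
    apply IsOpen.measurableSet
    apply isOpen_lt continuous_const
    unfold side
    fun_prop
  have hset : {θ ∈ Set.Ico 0 (2 * π) | 0 < side A B φ₁ θ * side A B φ₂ θ} =
      {θ | 0 < side A B φ₁ θ * side A B φ₂ θ} ∩ Set.Ico 0 (2 * π) := by
    ext θ; exact and_comm
  rw [hset, volume_inter_period hmeas (fun θ => by
      simp only [Set.mem_ofPred_eq, side_periodic h _ θ]) (exitAngle A B (φ₁ - π)),
    window_eq h h1 h2, measure_union _ measurableSet_Ioo, Real.volume_Ioo, Real.volume_Ioo,
    ← ENNReal.ofReal_add (by linarith) (by linarith)]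
  · congr 1
    rw [exitAngle_sub_pi, exitAngle_sub_pi, exitAngle, exitAngle]
    ring
  · rw [Set.disjoint_left]
    intro θ ha hb
    linarith [ha.2, hb.1]

lemma exists_polar {d : ℝ × ℝ} (hd : d ≠ 0) :
    ∃ n φ : ℝ, 0 < n ∧ d = (n * cos φ, n * sin φ) := by
  have hz : (⟨d.1, d.2⟩ : ℂ) ≠ 0 := fun h0 =>
    hd (Prod.ext (congrArg Complex.re h0) (congrArg Complex.im h0))
  refine ⟨‖(⟨d.1, d.2⟩ : ℂ)‖, Complex.arg ⟨d.1, d.2⟩, norm_pos_iff.2 hz, ?_⟩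
  rw [Complex.norm_mul_cos_arg, Complex.norm_mul_sin_arg]

lemma ang2_polar {n₁ n₂ φ₁ φ₂ : ℝ} (hn₁ : 0 < n₁) (hn₂ : 0 < n₂) :
    ang2 (n₁ * cos φ₁, n₁ * sin φ₁) (n₂ * cos φ₂, n₂ * sin φ₂) = arccos (cos (φ₂ - φ₁)) := by
  have hn : ∀ n φ : ℝ, 0 < n → nrm2 (n * cos φ, n * sin φ) = n := by
    intro n φ hn
    unfold nrm2
    rw [show (n * cos φ, n * sin φ).1 ^ 2 + (n * cos φ, n * sin φ).2 ^ 2 = n ^ 2 by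
      linear_combination n ^ 2 * Real.sin_sq_add_cos_sq φ, Real.sqrt_sq hn.le]
  unfold ang2
  rw [hn _ _ hn₁, hn _ _ hn₂, Real.cos_sub, dot2]
  congr 1
  field_simp

lemma det2_eq {c p : ℝ × ℝ} {R : ℝ} (hR : 0 < R)
    (h : (-(c - p).2 / R) ^ 2 + ((c - p).1 / R) ^ 2 < 1) (n φ θ : ℝ) :
    det2 ((c.1 + R * cos θ, c.2 + R * sin θ) - p) (n * cos φ, n * sin φ) =
      2 * R * n * side (-(c - p).2 / R) ((c - p).1 / R) φ θ := by
  have := two_mul_side h φ θ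
  rw [show ∀ x : ℝ, 2 * R * n * x = R * n * (2 * x) from fun x => by ring, this, Real.sin_sub]
  simp only [det2, Prod.fst_sub, Prod.snd_sub]
  field_simp
  ring

theorem stmt_8 (c : ℝ × ℝ) (R : ℝ) (hR : 0 < R) (p q r : ℝ × ℝ)
    (hq : q ≠ p) (hr : r ≠ p) (hp : nrm2 (p - c) < R) :
    volume {θ ∈ Set.Ico 0 (2 * π) |
        (0 < det2 ((c.1 + R * Real.cos θ, c.2 + R * Real.sin θ) - p) (q - p) ∧
          0 < det2 ((c.1 + R * Real.cos θ, c.2 + R * Real.sin θ) - p) (r - p)) ∨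
        (det2 ((c.1 + R * Real.cos θ, c.2 + R * Real.sin θ) - p) (q - p) < 0 ∧
          det2 ((c.1 + R * Real.cos θ, c.2 + R * Real.sin θ) - p) (r - p) < 0)} =
      ENNReal.ofReal (2 * π - 2 * ang2 (q - p) (r - p)) := by
  have hAB : (-(c - p).2 / R) ^ 2 + ((c - p).1 / R) ^ 2 < 1 := by
    have := (Real.sqrt_lt' hR).1 hp
    simp only [Prod.fst_sub, Prod.snd_sub] at this ⊢
    rw [div_pow, div_pow, ← add_div, div_lt_one (by positivity)]
    linarith
  obtain ⟨n₁, φ₁, hn₁, e₁⟩ := exists_polar (sub_ne_zero.2 hq)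
  obtain ⟨n₂, φ, hn₂, e₂⟩ := exists_polar (sub_ne_zero.2 hr)
  -- choose the angle of `r - p` within `π` of `φ₁`
  obtain ⟨φ₂, ⟨hl, hu⟩, e₂⟩ : ∃ φ₂ ∈ Set.Ioc (φ₁ - π) (φ₁ + π),
      r - p = (n₂ * cos φ₂, n₂ * sin φ₂) := by
    refine ⟨toIocMod Real.two_pi_pos (φ₁ - π) φ, ?_, ?_⟩
    · have := toIocMod_mem_Ioc Real.two_pi_pos (φ₁ - π) φ
      rwa [show φ₁ - π + 2 * π = φ₁ + π by ring] at this
    · rw [e₂, toIocMod, zsmul_eq_mul, Real.cos_sub_int_mul_two_pi, Real.sin_sub_int_mul_two_pi]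
  rw [e₁, e₂, ang2_polar hn₁ hn₂]
  have hset : ∀ θ, 0 < (2 * R * n₁ * side (-(c - p).2 / R) ((c - p).1 / R) φ₁ θ) *
        (2 * R * n₂ * side (-(c - p).2 / R) ((c - p).1 / R) φ₂ θ) ↔
      0 < side (-(c - p).2 / R) ((c - p).1 / R) φ₁ θ *
        side (-(c - p).2 / R) ((c - p).1 / R) φ₂ θ := by
    intro θ
    rw [show ∀ x y : ℝ, 2 * R * n₁ * x * (2 * R * n₂ * y) = 4 * R ^ 2 * n₁ * n₂ * (x * y) from
      fun x y => by ring]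
    exact mul_pos_iff_of_pos_left (by positivity)
  simp only [det2_eq hR hAB, ← mul_pos_iff, hset]
  rcases le_total φ₁ φ₂ with hle | hle
  · rw [volume_side hAB hle hu, Real.arccos_cos (by linarith) (by linarith)]
  · rw [← neg_sub φ₁ φ₂, Real.cos_neg, Real.arccos_cos (by linarith) (by linarith),
      ← volume_side hAB hle (by linarith)]
    simp only [mul_comm]
end

section
/- Let μ and ν be finite Borel measures on ℝ² whose supports are contained in [−1,1] × [−1,1]. If for every n ∈ ℕ and every a ∈ (0,1), ∫ (a·y + (1−a)·x)^n dμ(x,y) = ∫ (a·y + (1−a)·x)^n dν(x,y), then all joint moments of μ and ν agree: for all i, j ∈ ℕ, ∫ x^i y^j dμ(x,y) = ∫ x^i y^j dν(x,y). -/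
/-!
Fix `n = i + j`. Rescaling by `1 + t` with `a = t / (1 + t)` turns the hypothesis into the equality
of `∫ (t y + x) ^ n` against `μ` and `ν` for every `t > 0`. By the binomial theorem
(`integral_pow_eq_sum`) both sides are polynomials in `t` whose `k`-th coefficient is
`n.choose k * ∫ x ^ (n - k) y ^ k`; they agree at infinitely many points, hence coefficientwise, and
`k = j` gives the claim. The moments are finite because the measures are finite and concentrated on
a bounded square.
-/

open MeasureTheory

lemma integrable_monomial (μ : Measure (ℝ × ℝ)) [IsFiniteMeasure μ]
    (hμ : μ (Set.Icc (-1 : ℝ) 1 ×ˢ Set.Icc (-1 : ℝ) 1)ᶜ = 0) (i j : ℕ) :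
    Integrable (fun z : ℝ × ℝ => z.1 ^ i * z.2 ^ j) μ := by
  refine Integrable.of_bound (C := 1)
    (Continuous.aestronglyMeasurable (by fun_prop)) ?_
  have hae : ∀ᵐ z ∂μ, z ∈ Set.Icc (-1 : ℝ) 1 ×ˢ Set.Icc (-1 : ℝ) 1 := hμ
  filter_upwards [hae] with z hz
  rw [norm_mul, norm_pow, norm_pow]
  exact mul_le_one₀ (pow_le_one₀ (norm_nonneg _) (abs_le.2 hz.1)) (by positivity)
    (pow_le_one₀ (norm_nonneg _) (abs_le.2 hz.2))

lemma integral_pow_eq_sum (μ : Measure (ℝ × ℝ)) [IsFiniteMeasure μ]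
    (hμ : μ (Set.Icc (-1 : ℝ) 1 ×ˢ Set.Icc (-1 : ℝ) 1)ᶜ = 0) (n : ℕ) (t : ℝ) :
    ∫ z : ℝ × ℝ, (t * z.2 + z.1) ^ n ∂μ =
      ∑ k ∈ Finset.range (n + 1),
        (n.choose k : ℝ) * (∫ z : ℝ × ℝ, z.1 ^ (n - k) * z.2 ^ k ∂μ) * t ^ k := by
  have hexp : ∀ z : ℝ × ℝ, (t * z.2 + z.1) ^ n =
      ∑ k ∈ Finset.range (n + 1), (n.choose k * t ^ k) * (z.1 ^ (n - k) * z.2 ^ k) := by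
    intro z
    rw [add_pow]
    refine Finset.sum_congr rfl fun k _ => ?_
    ring
  simp_rw [hexp]
  rw [integral_finsetSum _ fun k _ => (integrable_monomial μ hμ _ _).const_mul _]
  refine Finset.sum_congr rfl fun k _ => ?_
  rw [integral_const_mul]
  ring

theorem stmt_12 (μ ν : Measure (ℝ × ℝ)) [IsFiniteMeasure μ] [IsFiniteMeasure ν]
    (hμ : μ (Set.Icc (-1 : ℝ) 1 ×ˢ Set.Icc (-1 : ℝ) 1)ᶜ = 0)
    (hν : ν (Set.Icc (-1 : ℝ) 1 ×ˢ Set.Icc (-1 : ℝ) 1)ᶜ = 0)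
    (h : ∀ n : ℕ, ∀ a ∈ Set.Ioo (0 : ℝ) 1,
      ∫ z : ℝ × ℝ, (a * z.2 + (1 - a) * z.1) ^ n ∂μ =
      ∫ z : ℝ × ℝ, (a * z.2 + (1 - a) * z.1) ^ n ∂ν) :
    ∀ i j : ℕ, ∫ z : ℝ × ℝ, z.1 ^ i * z.2 ^ j ∂μ = ∫ z : ℝ × ℝ, z.1 ^ i * z.2 ^ j ∂ν := by
  intro i j
  set n := i + j with hn
  have key : ∀ t : ℝ, 0 < t →
      ∫ z : ℝ × ℝ, (t * z.2 + z.1) ^ n ∂μ = ∫ z : ℝ × ℝ, (t * z.2 + z.1) ^ n ∂ν := by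
    intro t ht
    have ht1 : 0 < 1 + t := by linarith
    have hscale : ∀ z : ℝ × ℝ, (t * z.2 + z.1) ^ n =
        (1 + t) ^ n * (t / (1 + t) * z.2 + (1 - t / (1 + t)) * z.1) ^ n := by
      intro z
      rw [← mul_pow]
      congr 1
      field_simp
      ring
    simp_rw [hscale, integral_const_mul]
    rw [h n _ ⟨by positivity, by rw [div_lt_one ht1]; linarith⟩]
  let P (ρ : Measure (ℝ × ℝ)) : Polynomial ℝ :=
    ∑ k ∈ Finset.range (n + 1),
      Polynomial.C ((n.choose k : ℝ) * ∫ z : ℝ × ℝ, z.1 ^ (n - k) * z.2 ^ k ∂ρ) * Polynomial.X ^ k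
  have hP : P μ = P ν := by
    refine Polynomial.eq_of_infinite_eval_eq _ _ ((Set.Ioi_infinite (0 : ℝ)).mono ?_)
    intro t ht
    have hk := key t ht
    rw [integral_pow_eq_sum μ hμ, integral_pow_eq_sum ν hν] at hk
    simpa [P, Polynomial.eval_finsetSum] using hk
  have hcoeff (ρ : Measure (ℝ × ℝ)) :
      (P ρ).coeff j = (n.choose j : ℝ) * ∫ z : ℝ × ℝ, z.1 ^ i * z.2 ^ j ∂ρ := by
    have hj : j < n + 1 := by omega
    have hi : n - j = i := by omega
    simp only [P, Polynomial.finsetSum_coeff, Polynomial.coeff_C_mul_X_pow]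
    rw [Finset.sum_ite_eq, if_pos (Finset.mem_range.2 hj), hi]
  have hc := congrArg (fun p => p.coeff j) hP
  simp only [hcoeff] at hc
  have hne : (n.choose j : ℝ) ≠ 0 := by
    exact_mod_cast (Nat.choose_pos (by omega : j ≤ n)).ne'
  exact mul_left_cancel₀ hne hc
end

section
/- Let μ and ν be Borel probability measures on ℝ² whose supports are contained in [−1,1] × [−1,1]. If for every a ∈ (0,1) the pushforward measures of μ and of ν under the map (x,y) ↦ a·y + (1−a)·x are equal, then μ = ν. (Consequently, a random choice correspondence is rationalized by at most one random weighted utility under which all possible risk preferences over three prizes, with prespecified best and worst prizes, are monotonic with respect to first-order stochastic dominance.) -/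
/-!
Finite Borel measures on `ℝ × ℝ` are determined by their characteristic function, so it suffices to
show that `∫ exp (i (s x + t y))` is the same for `μ` and `ν`, for all real `s` and `t`. When
`s, t > 0`, the form `s x + t y` is the multiple `s + t` of `a y + (1 - a) x` with
`a = t / (s + t) ∈ (0, 1)`, and the hypothesis gives the equality (`integral_eq_of_pos`). In general,
move from the coefficients `(1, 1)` to `(s, t)` along the line `(1, 1) + w (s - 1, t - 1)`. Since the
supports are bounded, the integral is an entire function of `w` (`differentiable_integral_cexp`);
the two functions agree for all small real `w`, where both coefficients are positive, hence at
`w = 1` by the identity theorem.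
-/

open MeasureTheory

/-- The Fourier integral of a measure carried by a bounded set extends to an entire function of
the position `w` along a complex line of linear forms. -/
lemma differentiable_integral_cexp (μ : Measure (ℝ × ℝ)) [IsFiniteMeasure μ]
    (hμ : μ (Set.Icc (-1 : ℝ) 1 ×ˢ Set.Icc (-1 : ℝ) 1)ᶜ = 0) (p q : ℝ) :
    Differentiable ℂ (fun w : ℂ => ∫ z : ℝ × ℝ,
      Complex.exp (((z.1 + z.2 : ℝ) + w * (p * z.1 + q * z.2 : ℝ)) * Complex.I) ∂μ) := by
  intro w₀
  set C : ℝ := |p| + |q| with hC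
  have hN : ∀ᵐ z ∂μ, |p * z.1 + q * z.2| ≤ C := by
    have hbox : ∀ᵐ z ∂μ, z ∈ Set.Icc (-1 : ℝ) 1 ×ˢ Set.Icc (-1 : ℝ) 1 := hμ
    filter_upwards [hbox] with z hz
    have h1 : |z.1| ≤ 1 := abs_le.2 hz.1
    have h2 : |z.2| ≤ 1 := abs_le.2 hz.2
    calc |p * z.1 + q * z.2| ≤ |p| * |z.1| + |q| * |z.2| := by
          simpa only [abs_mul] using abs_add_le (p * z.1) (q * z.2)
      _ ≤ |p| * 1 + |q| * 1 := by gcongr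
      _ = C := by rw [hC]; ring
  have hC0 : 0 ≤ C := by positivity
  have hnorm : ∀ (w : ℂ) (m n : ℝ), |n| ≤ C →
      ‖Complex.exp (((m : ℂ) + w * (n : ℂ)) * Complex.I)‖ ≤ Real.exp (‖w‖ * C) := by
    intro w m n hn
    rw [Complex.norm_exp]
    apply Real.exp_le_exp.2
    have hre : ((((m : ℂ) + w * (n : ℂ)) * Complex.I)).re = -(w.im * n) := by simp
    rw [hre]
    calc -(w.im * n) ≤ |w.im| * |n| := by rw [← abs_mul]; exact neg_le_abs _
      _ ≤ ‖w‖ * C := by gcongr; exact Complex.abs_im_le_norm w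
  refine (hasDerivAt_integral_of_dominated_loc_of_deriv_le (μ := μ)
    (F' := fun w (z : ℝ × ℝ) =>
      Complex.exp (((z.1 + z.2 : ℝ) + w * (p * z.1 + q * z.2 : ℝ)) * Complex.I) *
        ((p * z.1 + q * z.2 : ℝ) * Complex.I))
    (bound := fun _ => Real.exp ((‖w₀‖ + 1) * C) * C)
    (Metric.ball_mem_nhds w₀ one_pos) ?_ ?_ ?_ ?_ ?_ ?_).2.differentiableAt
  · exact .of_forall fun w => Continuous.aestronglyMeasurable (by fun_prop)
  · refine Integrable.of_bound (Continuous.aestronglyMeasurable (by fun_prop))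
      (Real.exp (‖w₀‖ * C)) ?_
    filter_upwards [hN] with z hz using hnorm _ _ _ hz
  · exact Continuous.aestronglyMeasurable (by fun_prop)
  · filter_upwards [hN] with z hz w hw
    have hw' : ‖w‖ ≤ ‖w₀‖ + 1 := by
      have h1 := norm_le_norm_add_norm_sub' w w₀
      rw [mem_ball_iff_norm] at hw
      linarith
    rw [norm_mul, norm_mul, Complex.norm_I, mul_one, Complex.norm_real, Real.norm_eq_abs]
    refine mul_le_mul ((hnorm _ _ _ hz).trans ?_) hz (abs_nonneg _) (Real.exp_pos _).le
    gcongr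
  · exact integrable_const _
  · refine .of_forall fun z w _ => ?_
    exact ((((hasDerivAt_id w).mul_const _).const_add _).mul_const Complex.I).cexp.congr_deriv
      (by simp)

lemma integral_eq_of_pos (μ ν : Measure (ℝ × ℝ))
    (h : ∀ a ∈ Set.Ioo (0 : ℝ) 1,
      Measure.map (fun z : ℝ × ℝ => a * z.2 + (1 - a) * z.1) μ =
      Measure.map (fun z : ℝ × ℝ => a * z.2 + (1 - a) * z.1) ν)
    {p q : ℝ} (hp : 0 < p) (hq : 0 < q) :
    ∫ z : ℝ × ℝ, Complex.exp ((p * z.1 + q * z.2 : ℝ) * Complex.I) ∂μ =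
      ∫ z : ℝ × ℝ, Complex.exp ((p * z.1 + q * z.2 : ℝ) * Complex.I) ∂ν := by
  have hpq : 0 < p + q := add_pos hp hq
  have key : ∀ ρ : Measure (ℝ × ℝ),
      ∫ z : ℝ × ℝ, Complex.exp ((p * z.1 + q * z.2 : ℝ) * Complex.I) ∂ρ =
      ∫ r : ℝ, Complex.exp (((p + q) * r : ℝ) * Complex.I)
        ∂(Measure.map (fun z : ℝ × ℝ => q / (p + q) * z.2 + (1 - q / (p + q)) * z.1) ρ) := by
    intro ρ
    rw [integral_map (Continuous.aemeasurable (by fun_prop))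
      (Continuous.aestronglyMeasurable (by fun_prop))]
    congr 1 with z
    congr 3
    field_simp
    ring
  rw [key μ, key ν, h]
  exact ⟨div_pos hq hpq, (div_lt_one hpq).2 (by linarith)⟩

theorem stmt_14 (μ ν : Measure (ℝ × ℝ)) [IsProbabilityMeasure μ] [IsProbabilityMeasure ν]
    (hμ : μ (Set.Icc (-1 : ℝ) 1 ×ˢ Set.Icc (-1 : ℝ) 1)ᶜ = 0)
    (hν : ν (Set.Icc (-1 : ℝ) 1 ×ˢ Set.Icc (-1 : ℝ) 1)ᶜ = 0)
    (h : ∀ a ∈ Set.Ioo (0 : ℝ) 1,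
      Measure.map (fun z : ℝ × ℝ => a * z.2 + (1 - a) * z.1) μ =
      Measure.map (fun z : ℝ × ℝ => a * z.2 + (1 - a) * z.1) ν) :
    μ = ν := by
  refine Measure.ext_of_charFunDual (funext fun L => ?_)
  set s := L (1, 0) with hs
  set t := L (0, 1) with ht
  have hL : ∀ z : ℝ × ℝ, L z = s * z.1 + t * z.2 := by
    intro z
    have hz : z = z.1 • ((1, 0) : ℝ × ℝ) + z.2 • ((0, 1) : ℝ × ℝ) := by ext <;> simp
    conv_lhs => rw [hz]
    rw [map_add, map_smul, map_smul, smul_eq_mul, smul_eq_mul]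
    ring
  have hfun := AnalyticOnNhd.eq_of_frequently_eq (z₀ := (0 : ℂ))
    (Complex.analyticOnNhd_univ_iff_differentiable.2
      (differentiable_integral_cexp μ hμ (s - 1) (t - 1)))
    (Complex.analyticOnNhd_univ_iff_differentiable.2
      (differentiable_integral_cexp ν hν (s - 1) (t - 1))) ?_
  · have h1 := congrFun hfun 1
    simp only [charFunDual_apply, hL]
    convert h1 using 6 <;> (push_cast; ring)
  · have htend : Filter.Tendsto (fun r : ℝ => (r : ℂ)) (nhdsWithin 0 {0}ᶜ)
        (nhdsWithin 0 {0}ᶜ) := by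
      refine tendsto_nhdsWithin_of_tendsto_nhds_of_eventually_within _ ?_ ?_
      · exact (Complex.continuous_ofReal.tendsto' 0 0 (by simp)).mono_left nhdsWithin_le_nhds
      · filter_upwards [self_mem_nhdsWithin] with r hr
        simpa using hr
    refine htend.frequently (Filter.Eventually.frequently ?_)
    have hpos : ∀ c : ℝ, ∀ᶠ r : ℝ in nhdsWithin 0 {0}ᶜ, 0 < 1 + r * c := fun c =>
      nhdsWithin_le_nhds <| ((by fun_prop : Continuous fun r : ℝ => 1 + r * c).tendsto'
        0 1 (by simp)).eventually_const_lt one_pos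
    filter_upwards [hpos (s - 1), hpos (t - 1)] with r hr1 hr2
    have := integral_eq_of_pos μ ν h hr1 hr2
    convert this using 5 <;> (push_cast; ring)
end

section
/- Let C be a convex subset of a real vector space and let ≿ be a total transitive relation on C satisfying betweenness. Let D ⊆ C be finite and suppose A = M(D,≿) is nonempty. Then the convex hull of A is a face (extreme subset) of the convex hull of D — i.e., whenever x, y ∈ conv(D), λ ∈ (0,1), and λx + (1−λ)y ∈ conv(A), one has x, y ∈ conv(A) — and moreover conv(A) ∩ D = A. (This is the Extremeness property of random choice rationalized by random implicit expected utility.) -/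
/-!
Betweenness makes the weak lower, weak upper and strict lower contour sets of a point `a` convex
(`convex_lower`, `convex_upper`, `convex_strictLower`). Taking `a ∈ A`, every point of `conv D` is
weakly below `a` and every point of `conv A` is indifferent to `a`. Two facts then give the result.

* A proper mixture of two points weakly below `a` can be indifferent to `a` only if both points
  are (`left_ge_of_mix_ge`): a strictly worse component drags the mixture strictly below.
* A point of `conv D` indifferent to `a` lies in `conv A` (`mem_convexHull_of_ge`): it lies on a
  segment from `conv A` to `conv (D \ A)`, the latter hull is strictly below `a`, so by the first
  fact it must be the endpoint in `conv A`.

Hence if a mixture of `x, y ∈ conv D` is in `conv A`, it is indifferent to `a`, so `x` and `y` are,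
so they lie in `conv A`.
-/

open Set

variable {V : Type*} [AddCommGroup V] [Module ℝ V]

/-- The set of optimal elements of `D` with respect to the relation `r`. -/
def argMax (r : V → V → Prop) (D : Set V) : Set V := {x ∈ D | ∀ y ∈ D, r x y}

/-- `r` is total on `C`. -/
def TotalOn (r : V → V → Prop) (C : Set V) : Prop := ∀ p ∈ C, ∀ q ∈ C, r p q ∨ r q p

/-- `r` is transitive on `C`. -/
def TransOn (r : V → V → Prop) (C : Set V) : Prop :=
  ∀ p ∈ C, ∀ q ∈ C, ∀ s ∈ C, r p q → r q s → r p s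

/-- `r` satisfies the betweenness axiom on `C`. -/
def Betweenness (r : V → V → Prop) (C : Set V) : Prop :=
  ∀ p ∈ C, ∀ q ∈ C, ∀ α ∈ Set.Ioo (0 : ℝ) 1,
    ((r p q ∧ ¬ r q p) →
      ((r p (α • p + (1 - α) • q) ∧ ¬ r (α • p + (1 - α) • q) p) ∧
        (r (α • p + (1 - α) • q) q ∧ ¬ r q (α • p + (1 - α) • q)))) ∧
    ((r p q ∧ r q p) →
      (r p (α • p + (1 - α) • q) ∧ r (α • p + (1 - α) • q) p))

theorem mix_swap (p q : V) (l : ℝ) :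
    l • p + (1 - l) • q = (1 - l) • q + (1 - (1 - l)) • p := by
  rw [sub_sub_cancel, add_comm]

theorem mix_mem {C : Set V} (hC : Convex ℝ C) {p q : V} (hp : p ∈ C) (hq : q ∈ C) {l : ℝ}
    (hl : l ∈ Set.Ioo (0 : ℝ) 1) : l • p + (1 - l) • q ∈ C :=
  hC hp hq hl.1.le (sub_nonneg.2 hl.2.le) (by ring)

theorem one_sub_mem {l : ℝ} (hl : l ∈ Set.Ioo (0 : ℝ) 1) : 1 - l ∈ Set.Ioo (0 : ℝ) 1 :=
  ⟨sub_pos.2 hl.2, sub_lt_self _ hl.1⟩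

/-- The weak form of betweenness: a mixture lies weakly between its components. -/
theorem mix_between {C : Set V} (hC : Convex ℝ C) {r : V → V → Prop}
    (htrans : TransOn r C) (hbtw : Betweenness r C) {p q : V} (hp : p ∈ C) (hq : q ∈ C)
    {l : ℝ} (hl : l ∈ Set.Ioo (0 : ℝ) 1) (h : r p q) :
    r p (l • p + (1 - l) • q) ∧ r (l • p + (1 - l) • q) q := by
  obtain ⟨h1, h2⟩ := hbtw p hp q hq l hl
  by_cases hqp : r q p
  · obtain ⟨ha, hb⟩ := h2 ⟨h, hqp⟩
    exact ⟨ha, htrans _ (mix_mem hC hp hq hl) p hp q hq hb h⟩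
  · obtain ⟨ha, hb⟩ := h1 ⟨h, hqp⟩
    exact ⟨ha.1, hb.1⟩

theorem convex_lower {C : Set V} (hC : Convex ℝ C) {r : V → V → Prop} (htot : TotalOn r C)
    (htrans : TransOn r C) (hbtw : Betweenness r C) {a : V} (ha : a ∈ C) :
    Convex ℝ {z ∈ C | r a z} := by
  rw [convex_iff_forall_pos]
  rintro p ⟨hp, hap⟩ q ⟨hq, haq⟩ l m hl hm hlm
  obtain rfl : m = 1 - l := by linarith
  have hI : l ∈ Set.Ioo (0 : ℝ) 1 := ⟨hl, by linarith⟩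
  have hmC := mix_mem hC hp hq hI
  refine ⟨hmC, ?_⟩
  rcases htot p hp q hq with h | h
  · exact htrans a ha p hp _ hmC hap (mix_between hC htrans hbtw hp hq hI h).1
  · rw [mix_swap] at hmC ⊢
    exact htrans a ha q hq _ hmC haq (mix_between hC htrans hbtw hq hp (one_sub_mem hI) h).1

theorem convex_upper {C : Set V} (hC : Convex ℝ C) {r : V → V → Prop} (htot : TotalOn r C)
    (htrans : TransOn r C) (hbtw : Betweenness r C) {a : V} (ha : a ∈ C) :
    Convex ℝ {z ∈ C | r z a} := by
  rw [convex_iff_forall_pos]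
  rintro p ⟨hp, hpa⟩ q ⟨hq, hqa⟩ l m hl hm hlm
  obtain rfl : m = 1 - l := by linarith
  have hI : l ∈ Set.Ioo (0 : ℝ) 1 := ⟨hl, by linarith⟩
  have hmC := mix_mem hC hp hq hI
  refine ⟨hmC, ?_⟩
  rcases htot p hp q hq with h | h
  · exact htrans _ hmC q hq a ha (mix_between hC htrans hbtw hp hq hI h).2 hqa
  · rw [mix_swap] at hmC ⊢
    exact htrans _ hmC p hp a ha (mix_between hC htrans hbtw hq hp (one_sub_mem hI) h).2 hpa

/-- A proper mixture with a component weakly below `a` reaches the level of `a` only if the other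
component does: if `p` were strictly below `a`, then either `p` is weakly best and the mixture is
weakly below `p`, or `q` is strictly best and the mixture is strictly below `q`. -/
theorem left_ge_of_mix_ge {C : Set V} (hC : Convex ℝ C) {r : V → V → Prop} (htot : TotalOn r C)
    (htrans : TransOn r C) (hbtw : Betweenness r C) {a p q : V} (ha : a ∈ C) (hp : p ∈ C)
    (hq : q ∈ C) (haq : r a q) {l : ℝ} (hl : l ∈ Set.Ioo (0 : ℝ) 1)
    (hm : r (l • p + (1 - l) • q) a) : r p a := by
  have hmC := mix_mem hC hp hq hl
  by_cases hpq : r p q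
  · exact htrans p hp _ hmC a ha (mix_between hC htrans hbtw hp hq hl hpq).1 hm
  · have hqp := (htot p hp q hq).resolve_left hpq
    have h := ((hbtw q hq p hp (1 - l) (one_sub_mem hl)).1 ⟨hqp, hpq⟩).1.2
    rw [← mix_swap] at h
    exact absurd (htrans _ hmC a ha q hq hm haq) h

theorem right_ge_of_mix_ge {C : Set V} (hC : Convex ℝ C) {r : V → V → Prop} (htot : TotalOn r C)
    (htrans : TransOn r C) (hbtw : Betweenness r C) {a p q : V} (ha : a ∈ C) (hp : p ∈ C)
    (hq : q ∈ C) (hap : r a p) {l : ℝ} (hl : l ∈ Set.Ioo (0 : ℝ) 1)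
    (hm : r (l • p + (1 - l) • q) a) : r q a := by
  rw [mix_swap] at hm
  exact left_ge_of_mix_ge hC htot htrans hbtw ha hq hp hap (one_sub_mem hl) hm

theorem convex_strictLower {C : Set V} (hC : Convex ℝ C) {r : V → V → Prop} (htot : TotalOn r C)
    (htrans : TransOn r C) (hbtw : Betweenness r C) {a : V} (ha : a ∈ C) :
    Convex ℝ {z ∈ C | ¬ r z a} := by
  rw [convex_iff_forall_pos]
  rintro p ⟨hp, hpa⟩ q ⟨hq, hqa⟩ l m hl hm hlm
  obtain rfl : m = 1 - l := by linarith
  have hI : l ∈ Set.Ioo (0 : ℝ) 1 := ⟨hl, by linarith⟩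
  exact ⟨mix_mem hC hp hq hI, fun h => hpa (left_ge_of_mix_ge hC htot htrans hbtw ha hp hq
    ((htot a ha q hq).resolve_right hqa) hI h)⟩

/-- A point of `conv D` that is as good as a maximizer of `D` is a mixture of maximizers. -/
theorem mem_convexHull_of_ge {C : Set V} (hC : Convex ℝ C) {r : V → V → Prop}
    (htot : TotalOn r C) (htrans : TransOn r C) (hbtw : Betweenness r C) {D : Set V}
    (hDC : D ⊆ C) {a : V} (ha : a ∈ argMax r D) {z : V} (hz : z ∈ convexHull ℝ D)
    (hza : r z a) : z ∈ convexHull ℝ (argMax r D) := by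
  have haC := hDC ha.1
  have hAD : argMax r D ⊆ D := fun x hx => hx.1
  -- `convexHull_union` needs both parts nonempty, so `D = A` is treated separately.
  rcases (D \ argMax r D).eq_empty_or_nonempty with he | hB
  · exact convexHull_mono (sdiff_eq_empty.1 he) hz
  rw [← union_sdiff_cancel hAD, convexHull_union ⟨a, ha⟩ hB, mem_convexJoin] at hz
  obtain ⟨u, hu, v, hv, huv⟩ := hz
  have hA : argMax r D ⊆ {z ∈ C | r a z} := fun x hx => ⟨hDC hx.1, ha.2 x hx.1⟩
  have hB' : D \ argMax r D ⊆ {z ∈ C | ¬ r z a} := fun x hx =>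
    ⟨hDC hx.1, fun h => hx.2 ⟨hx.1, fun y hy =>
      htrans x (hDC hx.1) a haC y (hDC hy) h (ha.2 y hy)⟩⟩
  have hau := convexHull_min hA (convex_lower hC htot htrans hbtw haC) hu
  have hvl := convexHull_min hB' (convex_strictLower hC htot htrans hbtw haC) hv
  rw [← insert_endpoints_openSegment] at huv
  rcases huv with rfl | rfl | ⟨l, m, hl, hm, hlm, rfl⟩
  · exact hu
  · exact absurd hza hvl.2
  · obtain rfl : m = 1 - l := by linarith
    exact absurd (right_ge_of_mix_ge hC htot htrans hbtw haC hau.1 hvl.1 hau.2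
      ⟨hl, by linarith⟩ hza) hvl.2

theorem stmt_16 (C : Set V) (hC : Convex ℝ C) (r : V → V → Prop)
    (htot : TotalOn r C) (htrans : TransOn r C) (hbtw : Betweenness r C)
    (D : Set V) (hDC : D ⊆ C) (hDfin : D.Finite)
    (A : Set V) (hA : A = argMax r D) (hne : A.Nonempty) :
    (∀ x ∈ convexHull ℝ D, ∀ y ∈ convexHull ℝ D, ∀ l ∈ Set.Ioo (0 : ℝ) 1,
        l • x + (1 - l) • y ∈ convexHull ℝ A →
          x ∈ convexHull ℝ A ∧ y ∈ convexHull ℝ A) ∧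
      convexHull ℝ A ∩ D = A := by
  subst hA
  obtain ⟨a, ha⟩ := hne
  have haC := hDC ha.1
  have hlow : convexHull ℝ D ⊆ {z ∈ C | r a z} := convexHull_min
    (fun x hx => ⟨hDC hx, ha.2 x hx⟩) (convex_lower hC htot htrans hbtw haC)
  have hup : convexHull ℝ (argMax r D) ⊆ {z ∈ C | r z a} := convexHull_min
    (fun x hx => ⟨hDC hx.1, hx.2 a ha.1⟩) (convex_upper hC htot htrans hbtw haC)
  refine ⟨fun x hx y hy l hl hm => ?_, Subset.antisymm ?_ ?_⟩
  · obtain ⟨hxC, hax⟩ := hlow hx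
    obtain ⟨hyC, hay⟩ := hlow hy
    have hma := (hup hm).2
    exact ⟨mem_convexHull_of_ge hC htot htrans hbtw hDC ha hx
        (left_ge_of_mix_ge hC htot htrans hbtw haC hxC hyC hay hl hma),
      mem_convexHull_of_ge hC htot htrans hbtw hDC ha hy
        (right_ge_of_mix_ge hC htot htrans hbtw haC hxC hyC hax hl hma)⟩
  · rintro z ⟨hz, hzD⟩
    exact ⟨hzD, fun y hy => htrans z (hDC hzD) a haC y (hDC hy) (hup hz).2 (ha.2 y hy)⟩
  · exact fun z hz => ⟨subset_convexHull ℝ _ hz, hz.1⟩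
end

section
/- Let C be a convex subset of a real vector space and let ≿ be a total transitive relation on C satisfying betweenness. Let D ⊆ C, A ⊆ D, p ∈ A, and λ ∈ (0,1), and write λD + (1−λ)p = {λx + (1−λ)p : x ∈ D} and λA + (1−λ)p = {λx + (1−λ)p : x ∈ A}. Then A = M(D,≿) if and only if λA + (1−λ)p = M(λD + (1−λ)p, ≿). (This is the Stochastic Betweenness property: ρ_{λD+(1−λ)p}(λA+(1−λ)p) = ρ_D(A) for random choice rationalized by random implicit expected utility.) -/
/-!
Write `f x = l • x + (1 - l) • p`. Betweenness says that mixing with `p` does not change how an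
alternative compares with `p` itself: `x ≿ p ↔ f x ≿ p` and `p ≿ x ↔ p ≿ f x`
(`Betweenness.mix_iff`). Since `f p = p`, the point `p` is optimal in `D` iff it is optimal in
`f '' D`. Whenever `p` is optimal in a set, the optimal elements of that set are those weakly
better than `p` (`argMax_eq_of_mem`), so in that case `argMax (f '' D) = f '' argMax D`, and the
equivalence is the injectivity of `A ↦ f '' A`. Either side of the equivalence, together with
`p ∈ A`, makes `p` optimal.
-/

open Set

variable {V : Type*} [AddCommGroup V] [Module ℝ V]

/-- Mixing an alternative `x` with `p` preserves and reflects both weak comparisons with `p`. -/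
lemma Betweenness.mix_iff {C : Set V} {r : V → V → Prop} (htot : TotalOn r C)
    (hbtw : Betweenness r C) {p x : V} (hp : p ∈ C) (hx : x ∈ C) {l : ℝ}
    (hl : l ∈ Set.Ioo (0 : ℝ) 1) :
    (r x p ↔ r (l • x + (1 - l) • p) p) ∧ (r p x ↔ r p (l • x + (1 - l) • p)) := by
  have h₁ := hbtw x hx p hp l hl
  have hl' : 1 - l ∈ Set.Ioo (0 : ℝ) 1 := ⟨by linarith [hl.2], by linarith [hl.1]⟩
  have h₂ := hbtw p hp x hx (1 - l) hl'
  rw [sub_sub_cancel, add_comm] at h₂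
  have h₃ := htot p hp x hx
  tauto

/-- Once some element `p` is known to be optimal, optimality of `x` amounts to `x ≿ p`. -/
lemma argMax_eq_of_mem {W : Type*} {C : Set W} {r : W → W → Prop} (htrans : TransOn r C)
    {D : Set W} (hDC : D ⊆ C) {p : W} (hp : p ∈ argMax r D) : argMax r D = {x ∈ D | r x p} := by
  ext x
  exact ⟨fun h => ⟨h.1, h.2 p hp.1⟩, fun h => ⟨h.1, fun y hy =>
    htrans x (hDC h.1) p (hDC hp.1) y (hDC hy) h.2 (hp.2 y hy)⟩⟩

theorem stmt_17 (C : Set V) (hC : Convex ℝ C) (r : V → V → Prop)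
    (htot : TotalOn r C) (htrans : TransOn r C) (hbtw : Betweenness r C)
    (D : Set V) (hDC : D ⊆ C) (A : Set V) (hAD : A ⊆ D)
    (p : V) (hp : p ∈ A) (l : ℝ) (hl : l ∈ Set.Ioo (0 : ℝ) 1) :
    A = argMax r D ↔
      (fun x => l • x + (1 - l) • p) '' A =
        argMax r ((fun x => l • x + (1 - l) • p) '' D) := by
  have hpC : p ∈ C := hDC (hAD hp)
  have hmix : ∀ x ∈ D, (r x p ↔ r (l • x + (1 - l) • p) p) ∧
      (r p x ↔ r p (l • x + (1 - l) • p)) :=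
    fun x hx => hbtw.mix_iff htot hpC (hDC hx) hl
  set f : V → V := fun x => l • x + (1 - l) • p with hf
  have hfp : f p = p := by simp only [hf]; module
  have hinj : Function.Injective f := fun x y h =>
    smul_right_injective V hl.1.ne' (add_right_cancel h)
  have hfDC : f '' D ⊆ C := by
    rintro _ ⟨x, hx, rfl⟩
    exact hC (hDC hx) hpC hl.1.le (by linarith [hl.2]) (by ring)
  have hopt : p ∈ argMax r D ↔ p ∈ argMax r (f '' D) := by
    constructor
    · rintro ⟨hpD, h⟩
      refine ⟨⟨p, hpD, hfp⟩, ?_⟩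
      rintro _ ⟨y, hy, rfl⟩
      exact (hmix y hy).2.1 (h y hy)
    · rintro ⟨-, h⟩
      exact ⟨hAD hp, fun y hy => (hmix y hy).2.2 (h _ ⟨y, hy, rfl⟩)⟩
  have himage (h : p ∈ argMax r D) : argMax r (f '' D) = f '' argMax r D := by
    rw [argMax_eq_of_mem htrans hfDC (hopt.1 h), argMax_eq_of_mem htrans hDC h]
    ext z
    constructor
    · rintro ⟨⟨x, hx, rfl⟩, hz⟩
      exact ⟨x, ⟨hx, (hmix x hx).1.2 hz⟩, rfl⟩
    · rintro ⟨x, ⟨hx, hxp⟩, rfl⟩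
      exact ⟨⟨x, hx, rfl⟩, (hmix x hx).1.1 hxp⟩
  constructor
  · intro h
    rw [himage (h ▸ hp), ← h]
  · intro h
    have hpf : p ∈ argMax r (f '' D) := h ▸ ⟨p, hp, hfp⟩
    exact hinj.image_injective (h.trans (himage (hopt.2 hpf)))
end

section
/- Let C be a convex subset of a real vector space and let ≿ be a transitive relation on C satisfying independence: for all α ∈ (0,1] and all p, q, r ∈ C, p ≿ q if and only if αp + (1−α)r ≿ αq + (1−α)r. Then for all D, D′ ⊆ C and λ ∈ (0,1), M(λD + (1−λ)D′, ≿) = λ·M(D,≿) + (1−λ)·M(D′,≿), where λD + (1−λ)D′ = {λx + (1−λ)y : x ∈ D, y ∈ D′}. In particular, a mixture λp + (1−λ)p′ (p ∈ D, p′ ∈ D′) is optimal in λD + (1−λ)D′ if and only if p is optimal in D and p′ is optimal in D′. (This is the key fact making the class of sets N_E(D,A) closed under finite intersections, which underlies the unique identification of random expected utility.) -/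
/-! A mixture `l • p + (1 - l) • p'` can be perturbed in one coordinate at a time. If it is optimal
among all mixtures, comparing it with `l • y + (1 - l) • p'` and cancelling the common part `p'` by
independence gives `r p y`, and symmetrically for `p'`. Conversely, if `p` and `p'` are optimal,
independence gives the two comparisons
`l • p + (1 - l) • p' ≿ l • y + (1 - l) • p' ≿ l • y + (1 - l) • y'`, which transitivity chains.
The equality of sets follows from this equivalence. -/

open Set

variable {V : Type*} [AddCommGroup V] [Module ℝ V]

/-- `r` satisfies the independence axiom on `C`. -/
def Independence (r : V → V → Prop) (C : Set V) : Prop :=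
  ∀ α ∈ Set.Ioc (0 : ℝ) 1, ∀ p ∈ C, ∀ q ∈ C, ∀ s ∈ C,
    (r p q ↔ r (α • p + (1 - α) • s) (α • q + (1 - α) • s))

theorem stmt_18 (C : Set V) (hC : Convex ℝ C) (r : V → V → Prop)
    (htrans : TransOn r C) (hind : Independence r C)
    (D D' : Set V) (hD : D ⊆ C) (hD' : D' ⊆ C) (l : ℝ) (hl : l ∈ Set.Ioo (0 : ℝ) 1) :
    argMax r (Set.image2 (fun x y => l • x + (1 - l) • y) D D') =
        Set.image2 (fun x y => l • x + (1 - l) • y) (argMax r D) (argMax r D') ∧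
      ∀ p ∈ D, ∀ p' ∈ D',
        (l • p + (1 - l) • p' ∈ argMax r (Set.image2 (fun x y => l • x + (1 - l) • y) D D') ↔
          p ∈ argMax r D ∧ p' ∈ argMax r D') := by
  have hl1 : 1 - l ∈ Set.Ioc (0 : ℝ) 1 := ⟨by linarith [hl.2], by linarith [hl.1]⟩
  have mix : ∀ x ∈ C, ∀ y ∈ C, l • x + (1 - l) • y ∈ C := fun x hx y hy =>
    hC hx hy hl.1.le hl1.1.le (by ring)
  have left : ∀ p ∈ C, ∀ q ∈ C, ∀ s ∈ C,
      (r p q ↔ r (l • p + (1 - l) • s) (l • q + (1 - l) • s)) := hind l ⟨hl.1, hl.2.le⟩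
  have right : ∀ p ∈ C, ∀ q ∈ C, ∀ s ∈ C,
      (r p q ↔ r (l • s + (1 - l) • p) (l • s + (1 - l) • q)) := by
    intro p hp q hq s hs
    have h := hind (1 - l) hl1 p hp q hq s hs
    rwa [sub_sub_cancel, add_comm _ (l • s), add_comm _ (l • s)] at h
  have key : ∀ p ∈ D, ∀ p' ∈ D',
      (l • p + (1 - l) • p' ∈ argMax r (Set.image2 (fun x y => l • x + (1 - l) • y) D D') ↔
        p ∈ argMax r D ∧ p' ∈ argMax r D') := by
    intro p hp p' hp'
    constructor
    · rintro ⟨-, h⟩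
      exact ⟨⟨hp, fun y hy => (left p (hD hp) y (hD hy) p' (hD' hp')).2
          (h _ (Set.mem_image2_of_mem hy hp'))⟩,
        ⟨hp', fun y hy => (right p' (hD' hp') y (hD' hy) p (hD hp)).2
          (h _ (Set.mem_image2_of_mem hp hy))⟩⟩
    · rintro ⟨⟨-, h⟩, ⟨-, h'⟩⟩
      refine ⟨Set.mem_image2_of_mem hp hp', ?_⟩
      rintro _ ⟨y, hy, y', hy', rfl⟩
      exact htrans _ (mix p (hD hp) p' (hD' hp')) _ (mix y (hD hy) p' (hD' hp'))
        _ (mix y (hD hy) y' (hD' hy'))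
        ((left p (hD hp) y (hD hy) p' (hD' hp')).1 (h y hy))
        ((right p' (hD' hp') y' (hD' hy') y (hD hy)).1 (h' y' hy'))
  refine ⟨Set.ext fun z => ⟨fun hz => ?_, ?_⟩, key⟩
  · obtain ⟨p, hp, p', hp', rfl⟩ := hz.1
    obtain ⟨h, h'⟩ := (key p hp p' hp').1 hz
    exact ⟨p, h, p', h', rfl⟩
  · rintro ⟨p, h, p', h', rfl⟩
    exact (key p h.1 p' h'.1).2 ⟨h, h'⟩
end
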